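/- arXiv:1905.03878 — 6 statements merged into one kernel-verified Lean document; each statement's English description precedes it below -/
import Mathlib

section
/- For every nonnegative integer m, the greedy width of 2m satisfies G(2m) ≤ max{ (3/2)·√(2m), 38 }. -/
/-!
Let `t` be the first term of the greedy decomposition of `2m`. Maximality of `t` forces
`2m = t(t-1) + 2r` with `r < t`, hence `G(2m) = t + G(2r)`, where `r` is only about `√(2m)`.
The bound is proved by strong induction in the square-root-free form
`4 G² ≤ 18 m ∨ G ≤ 38`:

* for `t ≥ 78`, both alternatives for `r` give `4 (t + G(2r))² ≤ 9 t(t-1) ≤ 18 m`;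
* for `42 ≤ t < 78`, the inequality `G(2r) ≤ 20`, valid for all `r < 78`, suffices;
* for `t < 42`, the finitely many pairs `(t, r)` are checked by evaluation
  (`greedyWidth_small`).

The evaluations use `fuelWidth`, a structurally recursive copy of `greedyWidth` which the
kernel can compute.
-/

/-- The first term of the greedy decomposition of `2m`: the largest positive integer `t`
with `t(t−1) ≤ 2m`. -/
def greedyFirst (m : ℕ) : ℕ :=
  Nat.findGreatest (fun t => t * (t - 1) ≤ 2 * m) (2 * m + 1)

/-- The greedy width `G(2m)`: the sum `t₀ + t₁ + ⋯ + t_d` of the terms of the greedy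
decomposition `2m = t₀(t₀−1) + t₁(t₁−1) + ⋯ + t_d(t_d−1)`, where `t₀` is the largest
positive integer with `t₀(t₀−1) ≤ 2m` and the remaining terms form the greedy
decomposition of `2m − t₀(t₀−1)`; the decomposition of `0` is empty. -/
def greedyWidth : ℕ → ℕ
  | 0 => 0
  | (m + 1) =>
      greedyFirst (m + 1) +
        greedyWidth ((2 * (m + 1) - greedyFirst (m + 1) * (greedyFirst (m + 1) - 1)) / 2)
decreasing_by
  have h2 : 2 ≤ greedyFirst (m + 1) := by
    apply Nat.le_findGreatest (by omega)
    show 2 * (2 - 1) ≤ 2 * (m + 1)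
    omega
  have h : 2 ≤ greedyFirst (m + 1) * (greedyFirst (m + 1) - 1) := by
    calc 2 = 2 * 1 := rfl
    _ ≤ greedyFirst (m + 1) * (greedyFirst (m + 1) - 1) :=
        Nat.mul_le_mul h2 (by omega)
  omega

theorem greedyFirst_spec (m : ℕ) :
    greedyFirst m * (greedyFirst m - 1) ≤ 2 * m :=
  Nat.findGreatest_spec (P := fun t => t * (t - 1) ≤ 2 * m) (Nat.zero_le (2 * m + 1)) (by simp)

theorem lt_greedyFirst_succ (m : ℕ) :
    2 * m < (greedyFirst m + 1) * greedyFirst m := by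
  by_contra! h
  have hle : greedyFirst m + 1 ≤ 2 * m + 1 := by
    rcases Nat.eq_zero_or_pos (greedyFirst m) with h0 | h0
    · omega
    · nlinarith
  have : greedyFirst m + 1 ≤ greedyFirst m :=
    Nat.le_findGreatest (P := fun t => t * (t - 1) ≤ 2 * m) hle (by simpa using h)
  omega

/-- One greedy step, stated without subtraction: `2m = t(t-1) + 2r` with `r < t`, and the width
of `2m` is `t` plus the width of `2r`. -/
theorem greedyWidth_step {m : ℕ} (hm : m ≠ 0) :
    ∃ t r, r < t ∧ r < m ∧ 2 * m + t = t * t + 2 * r ∧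
      greedyWidth m = t + greedyWidth r := by
  obtain ⟨k, rfl⟩ := Nat.exists_eq_succ_of_ne_zero hm
  have h1 := greedyFirst_spec (k + 1)
  have h2 := lt_greedyFirst_succ (k + 1)
  refine ⟨greedyFirst (k + 1),
    (2 * (k + 1) - greedyFirst (k + 1) * (greedyFirst (k + 1) - 1)) / 2, ?_⟩
  rw [Nat.succ_eq_add_one, greedyWidth]
  generalize greedyFirst (k + 1) = t at *
  obtain _ | s := t
  · omega
  obtain _ | s := s
  · omega
  have heven : 2 ∣ (s + 1 + 1) * (s + 1) := by
    rw [mul_comm]; exact (Nat.even_mul_succ_self (s + 1)).two_dvd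
  obtain ⟨c, hc⟩ := heven
  simp only [Nat.add_sub_cancel] at *
  have hr : (2 * (k + 1) - (s + 1 + 1) * (s + 1)) / 2 = k + 1 - c := by omega
  rw [hr]
  have h3 : (s + 1 + 1 + 1) * (s + 1 + 1) = 2 * c + 2 * (s + 1 + 1) := by rw [← hc]; ring
  have h4 : (s + 1 + 1) * (s + 1 + 1) = 2 * c + (s + 1 + 1) := by rw [← hc]; ring
  have hpos : 0 < (s + 1 + 1) * (s + 1) := by positivity
  refine ⟨by omega, by omega, by omega, trivial⟩

/-- `greedyWidth` truncated after the given number of steps; it is structurally recursive, so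
that the kernel can evaluate it. -/
def fuelWidth : ℕ → ℕ → ℕ
  | 0, _ => 0
  | _ + 1, 0 => 0
  | f + 1, m + 1 =>
      greedyFirst (m + 1) +
        fuelWidth f ((2 * (m + 1) - greedyFirst (m + 1) * (greedyFirst (m + 1) - 1)) / 2)

theorem fuelWidth_eq (f m : ℕ) (h : m ≤ f) : fuelWidth f m = greedyWidth m := by
  induction f generalizing m with
  | zero =>
    obtain rfl : m = 0 := by omega
    rw [fuelWidth, greedyWidth]
  | succ f ih =>
    cases m with
    | zero => rw [fuelWidth, greedyWidth]
    | succ m =>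
      rw [fuelWidth, greedyWidth, ih]
      have h2 : 2 ≤ greedyFirst (m + 1) :=
        Nat.le_findGreatest (P := fun t => t * (t - 1) ≤ 2 * (m + 1)) (by omega) (by omega)
      have : 2 * 1 ≤ greedyFirst (m + 1) * (greedyFirst (m + 1) - 1) :=
        Nat.mul_le_mul h2 (by omega)
      omega

theorem greedyWidth_le_twenty {r : ℕ} (hr : r < 78) : greedyWidth r ≤ 20 := by
  have h : ∀ r < 78, fuelWidth 77 r ≤ 20 := by decide +kernel
  rw [← fuelWidth_eq 77 r (by omega)]
  exact h r hr

theorem greedyWidth_small {t r : ℕ} (ht : t < 42) (hr : r < t) :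
    4 * (t + greedyWidth r) ^ 2 ≤ 9 * (t * (t - 1) + 2 * r) ∨ t + greedyWidth r ≤ 38 := by
  have h : ∀ t < 42, ∀ r < t,
      4 * (t + fuelWidth 41 r) ^ 2 ≤ 9 * (t * (t - 1) + 2 * r) ∨ t + fuelWidth 41 r ≤ 38 := by
    decide +kernel
  rw [← fuelWidth_eq 41 r (by omega)]
  exact h t ht r hr

theorem greedyWidth_sq_le (m : ℕ) : 4 * greedyWidth m ^ 2 ≤ 18 * m ∨ greedyWidth m ≤ 38 := by
  induction m using Nat.strong_induction_on with
  | _ m ih =>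
    rcases eq_or_ne m 0 with rfl | hm
    · right; rw [greedyWidth]; omega
    obtain ⟨t, r, hrt, hrm, hmt, hw⟩ := greedyWidth_step hm
    rw [hw]
    rcases lt_or_ge t 42 with ht | ht
    · have h := greedyWidth_small ht hrt
      have : t * (t - 1) + t = t * t := by
        obtain ⟨s, rfl⟩ : ∃ s, t = s + 1 := ⟨t - 1, by omega⟩
        simp only [Nat.add_sub_cancel]; ring
      omega
    left
    rcases lt_or_ge t 78 with ht' | ht'
    · have h := greedyWidth_le_twenty (hrt.trans ht')
      nlinarith [Nat.pow_le_pow_left (Nat.add_le_add_left h t) 2]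
    rcases ih r hrm with h | h
    · have hg : 2 * greedyWidth r + 2 ≤ t := by
        by_contra! hc
        have : t ≤ 2 * greedyWidth r + 1 := by omega
        nlinarith
      -- Now `(2t + 2G(2r))² ≤ (3t - 2)² ≤ 9t(t - 1)`.
      obtain ⟨s, rfl⟩ : ∃ s, t = s + 2 := ⟨t - 2, by omega⟩
      have : 2 * (s + 2 + greedyWidth r) ≤ 3 * s + 4 := by omega
      nlinarith [Nat.pow_le_pow_left this 2]
    · nlinarith [Nat.pow_le_pow_left (Nat.add_le_add_left h t) 2]

/-- For every nonnegative integer `m`, the greedy width of `2m` satisfies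
`G(2m) ≤ max{ (3/2)·√(2m), 38 }`. -/
theorem greedyWidth_le (m : ℕ) :
    (greedyWidth m : ℝ) ≤ max ((3 / 2) * Real.sqrt (2 * m)) 38 := by
  rcases greedyWidth_sq_le m with h | h
  · apply le_max_of_le_left
    have h' : 4 * (greedyWidth m : ℝ) ^ 2 ≤ 18 * m := by exact_mod_cast h
    have : 2 / 3 * (greedyWidth m : ℝ) ≤ Real.sqrt (2 * m) :=
      Real.le_sqrt_of_sq_le (by nlinarith)
    linarith
  · apply le_max_of_le_right
    exact_mod_cast h
end

section
/- For every nonnegative integer m there exist positive integers t₁, …, t_d with t₁(t₁−1) + ⋯ + t_d(t_d−1) = 2m and t₁ + ⋯ + t_d ≤ max{ (3/2)·√(2m), 38 }. -/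
/-!
Greedy decomposition: let `t` be the largest integer with `t(t-1) ≤ 2m`. Then the remainder
`r = m - t(t-1)/2` satisfies `r < t`, and one takes `t` together with a decomposition of `r`.
By induction `r` has a decomposition of width `s` at most `38` or at most `(3/2)√(2r)`. Once
`t ≥ 81`, both `t + 38` and `t + (3/2)√(2t)` are at most `(3/2)√(t(t-1)) ≤ (3/2)√(2m)`, which
closes the induction. For `42 ≤ t ≤ 80` the remainder is below `80`, so it has width at most `20`
(`greedy_width_tiny`), and `t + 20 ≤ (3/2)√(t(t-1))`. The values `m < 861`, for which `t < 42`,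
are settled by evaluating the width of the greedy decomposition (`greedy_width_small`).

The bound `s ≤ max ((3/2)√(2m)) 38` is handled in the integral form `s ≤ 38 ∨ 2s² ≤ 9m`.
-/

/-- Greedy decomposition of `m` using the parts `n + 2, n + 1, …, 3` at most once each, and then
as many parts `2` as needed. -/
def greedy : ℕ → ℕ → List ℕ
  | 0, m => List.replicate m 2
  | n + 1, m =>
    if (n + 3) * (n + 2) ≤ 2 * m then (n + 3) :: greedy n (m - (n + 3) * (n + 2) / 2)
    else greedy n m

theorem greedy_pos (n m : ℕ) : ∀ t ∈ greedy n m, 0 < t := by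
  induction n generalizing m with
  | zero =>
    intro t ht
    rw [greedy] at ht
    have := List.eq_of_mem_replicate ht
    omega
  | succ n ih =>
    intro t ht
    rw [greedy] at ht
    split_ifs at ht with h
    · rcases List.mem_cons.1 ht with rfl | ht
      · omega
      · exact ih _ t ht
    · exact ih _ t ht

theorem greedy_sum (n m : ℕ) : ((greedy n m).map fun t => t * (t - 1)).sum = 2 * m := by
  induction n generalizing m with
  | zero => simp [greedy, mul_comm]
  | succ n ih =>
    rw [greedy]
    split_ifs with h
    · rw [List.map_cons, List.sum_cons, ih]
      obtain ⟨k, hk⟩ := Nat.even_mul_succ_self (n + 2)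
      have e : (n + 3) * (n + 2) = k + k := by rw [← hk]; ring
      have e' : (n + 3) * (n + 3 - 1) = k + k := e
      rw [e']
      rw [e] at h ⊢
      omega
    · exact ih m

theorem greedy_width_small :
    ∀ m < 861, (greedy 39 m).sum ≤ 38 ∨ 2 * (greedy 39 m).sum ^ 2 ≤ 9 * m := by
  -- writing `m = 41a + b` keeps the recursion depth of the evaluation small
  have key : ∀ a < 21, ∀ b < 41, (greedy 39 (41 * a + b)).sum ≤ 38 ∨
      2 * (greedy 39 (41 * a + b)).sum ^ 2 ≤ 9 * (41 * a + b) := by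
    decide +kernel
  intro m hm
  have h := key (m / 41) (by omega) (m % 41) (by omega)
  rwa [Nat.div_add_mod] at h

theorem greedy_width_tiny : ∀ r < 80, (greedy 11 r).sum ≤ 20 := by
  decide +kernel

/-- The largest `t = n + 1` with `t(t-1) ≤ 2m`. -/
theorem exists_largest_part (m : ℕ) :
    ∃ n, n * (n + 1) ≤ 2 * m ∧ 2 * m < (n + 1) * (n + 2) := by
  induction m with
  | zero => exact ⟨0, by simp⟩
  | succ m ih =>
    obtain ⟨n, h1, h2⟩ := ih
    by_cases h : 2 * (m + 1) < (n + 1) * (n + 2)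
    · exact ⟨n, by omega, h⟩
    · exact ⟨n + 1, by linarith, by nlinarith⟩

theorem goodWidth_all (m : ℕ) :
    ∃ l : List ℕ, (∀ t ∈ l, 0 < t) ∧ (l.map fun t => t * (t - 1)).sum = 2 * m ∧
      (l.sum ≤ 38 ∨ 2 * l.sum ^ 2 ≤ 9 * m) := by
  induction m using Nat.strong_induction_on with
  | _ m ih =>
    rcases lt_or_ge m 861 with hm | hm
    · exact ⟨greedy 39 m, greedy_pos _ _, greedy_sum _ _, greedy_width_small m hm⟩
    obtain ⟨n, h1, h2⟩ := exists_largest_part m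
    have hn : 41 ≤ n := by
      by_contra hlt
      have : n ≤ 40 := by omega
      nlinarith
    obtain ⟨q, hq⟩ := Nat.even_mul_succ_self n
    have hqm : q ≤ m := by omega
    have hq0 : 0 < q := by nlinarith
    have hr : m - q ≤ n := by
      have : 2 * m < n * (n + 1) + 2 * (n + 1) := by linarith
      omega
    -- it suffices to decompose the remainder `m - q` with small enough width
    suffices H : ∃ l : List ℕ, (∀ t ∈ l, 0 < t) ∧
        (l.map fun t => t * (t - 1)).sum = 2 * (m - q) ∧ 2 * (n + 1 + l.sum) ^ 2 ≤ 9 * m by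
      obtain ⟨l, hl, hs, hw⟩ := H
      refine ⟨(n + 1) :: l, ?_, ?_, Or.inr ?_⟩
      · intro t ht
        rcases List.mem_cons.1 ht with rfl | ht
        · omega
        · exact hl t ht
      · rw [List.map_cons, List.sum_cons, hs, Nat.add_sub_cancel, mul_comm (n + 1) n, hq]
        omega
      · rwa [List.sum_cons]
    rcases lt_or_ge n 80 with hn' | hn'
    · refine ⟨greedy 11 (m - q), greedy_pos _ _, greedy_sum _ _, ?_⟩
      have hw := greedy_width_tiny (m - q) (by omega)
      have : (n + 1 + (greedy 11 (m - q)).sum) ^ 2 ≤ (n + 1 + 20) ^ 2 := by gcongr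
      nlinarith
    · obtain ⟨l, hl, hs, hw⟩ := ih (m - q) (by omega)
      refine ⟨l, hl, hs, ?_⟩
      generalize l.sum = s at hw
      rcases hw with hw | hw
      · have : (n + 1 + s) ^ 2 ≤ (n + 1 + 38) ^ 2 := by gcongr
        nlinarith
      · -- `2s² ≤ 9n` forces `s ≤ n/4` since `n ≥ 72`
        have hs4 : 4 * s ≤ n := by
          by_contra hlt
          push Not at hlt
          nlinarith
        have : (4 * (n + 1 + s)) ^ 2 ≤ (5 * n + 4) ^ 2 := by gcongr; omega
        nlinarith

/-- For every nonnegative integer `m` there exist positive integers `t₁, …, t_d` with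
`t₁(t₁−1) + ⋯ + t_d(t_d−1) = 2m` and `t₁ + ⋯ + t_d ≤ max{ (3/2)·√(2m), 38 }`. -/
theorem exists_decomposition_of_small_width (m : ℕ) :
    ∃ l : List ℕ, (∀ t ∈ l, 0 < t) ∧ (l.map fun t => t * (t - 1)).sum = 2 * m ∧
      (l.sum : ℝ) ≤ max ((3 / 2) * Real.sqrt (2 * m)) 38 := by
  obtain ⟨l, hl, hs, hw⟩ := goodWidth_all m
  refine ⟨l, hl, hs, le_max_iff.2 ?_⟩
  rcases hw with hw | hw
  · exact Or.inr (by exact_mod_cast hw)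
  · left
    have hw' : 2 * (l.sum : ℝ) ^ 2 ≤ 9 * m := by exact_mod_cast hw
    have : (2 / 3) * (l.sum : ℝ) ≤ Real.sqrt (2 * m) := Real.le_sqrt_of_sq_le (by nlinarith)
    linarith
end

section
/- For every integer n ≥ 38 and every nonnegative even integer 2m with 2m ≤ (4/9)·n², the integer 2m is realisable in dimension n; that is, there exist positive integers d₁, …, d_t with d₁ + ⋯ + d_t = n and d₁² + ⋯ + d_t² = n + 2m. -/
/-!
A part `d` contributes `d (d - 1)` to `2m`, and parts equal to `1` contribute nothing, so the
claim is that `m` is a sum of triangular numbers `d (d - 1) / 2` of total cost `∑ d ≤ n`.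

Choose the first part `d` greedily, with `d (d - 1) / 2 ≤ m < d (d + 1) / 2`. The remainder `r`
is then less than `d`, and `2m ≤ (4/9) n²` forces `3 d ≤ 2 n + 2`. So a remainder of size linear
in `n` is to be realised in dimension `n - d ≥ (n - 2) / 3`. For `n ≥ 116` the dimension `n - d`
is at least `38` and `r` is far below `(2/9) (n - d)²`, so induction applies. For `38 ≤ n < 116`
the remainder is below `80` and is realised by at most three parts in the remaining dimension
(`exists_three_parts`).
-/

/-- `2 * m` is realisable in dimension `n`. -/
def Realisable (n m : ℕ) : Prop :=
  ∃ l : List ℕ, (∀ d ∈ l, 0 < d) ∧ l.sum = n ∧ (l.map fun d => d ^ 2).sum = n + 2 * m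

lemma Realisable.zero : Realisable 0 0 := ⟨[], by simp⟩

/-- Adding a part `d`; the case `d = 0` is allowed and adds nothing. -/
lemma Realisable.add_part {n m n' m' : ℕ} (d : ℕ) (h : Realisable n m) (hn : n' = n + d)
    (hm : 2 * m' + d = 2 * m + d ^ 2) : Realisable n' m' := by
  obtain ⟨l, hpos, hsum, hsq⟩ := h
  rcases Nat.eq_zero_or_pos d with rfl | hd
  · exact ⟨l, hpos, by omega, by omega⟩
  · refine ⟨d :: l, ?_, ?_, ?_⟩
    · simpa [hd] using hpos
    · rw [List.sum_cons]
      omega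
    · rw [List.map_cons, List.sum_cons]
      omega

lemma Realisable.mono {n n' m : ℕ} (h : Realisable n m) (hn : n ≤ n') : Realisable n' m := by
  induction n', hn using Nat.le_induction with
  | base => exact h
  | succ k _ ih => exact ih.add_part 1 rfl (by omega)

/-- Three parts realise every `r < 80` cheaply. The thresholds `25`, `32`, `40` are those needed
for `n = 38`, `39 ≤ n ≤ 48` and `49 ≤ n ≤ 60`. -/
lemma exists_three_parts : ∀ r < 80, ∃ a < 14, ∃ b < 14, ∃ c < 14,
    a ^ 2 + b ^ 2 + c ^ 2 = a + b + c + 2 * r ∧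
    a + b + c ≤ if r ≤ 25 then 12 else if r ≤ 32 then 13 else if r ≤ 40 then 16 else 20 := by
  decide +kernel

lemma exists_sq_eq (d : ℕ) : ∃ x, d ^ 2 = d + 2 * x := by
  induction d with
  | zero => exact ⟨0, by norm_num⟩
  | succ d ih =>
    obtain ⟨x, hx⟩ := ih
    exact ⟨x + d, by linarith⟩

lemma realisable_of_lt_eighty {r k : ℕ} (hr : r < 80)
    (hk : (if r ≤ 25 then 12 else if r ≤ 32 then 13 else if r ≤ 40 then 16 else 20) ≤ k) :
    Realisable k r := by
  obtain ⟨a, -, b, -, c, -, hsq, hle⟩ := exists_three_parts r hr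
  obtain ⟨x, hx⟩ := exists_sq_eq a
  obtain ⟨z, hz⟩ := exists_sq_eq b
  have h1 : Realisable a x := Realisable.zero.add_part a (by omega) (by omega)
  have h2 : Realisable (a + b) (x + z) := h1.add_part b rfl (by omega)
  have h3 : Realisable (a + b + c) r := h2.add_part c rfl (by omega)
  exact h3.mono (hle.trans hk)

/-- The greedy choice of the first part. -/
lemma exists_greedy_part (m : ℕ) : ∃ d r : ℕ, r < d ∧ 2 * m + d = 2 * r + d ^ 2 := by
  induction m with
  | zero => exact ⟨1, 0, by norm_num, by norm_num⟩
  | succ m ih =>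
    obtain ⟨d, r, hr, h⟩ := ih
    by_cases hlt : r + 1 < d
    · exact ⟨d, r + 1, hlt, by omega⟩
    · obtain rfl : d = r + 1 := by omega
      exact ⟨r + 2, 0, by omega, by nlinarith⟩

lemma realisable_of_nine_mul_le (n : ℕ) :
    ∀ m, 38 ≤ n → 9 * m ≤ 2 * n ^ 2 → Realisable n m := by
  induction n using Nat.strong_induction_on with
  | _ n ih =>
    intro m hn hm
    obtain ⟨d, r, hr, h⟩ := exists_greedy_part m
    have hd : 3 * d ≤ 2 * n + 2 := by
      by_contra! hcon
      -- `3 (d - 1) ≥ 2 n` and `d ≥ 2` give `9 d (d - 1) > 4 n²`.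
      obtain ⟨e, rfl⟩ : ∃ e, d = e + 1 := ⟨d - 1, by omega⟩
      have he : 2 * n ≤ 3 * e := by omega
      nlinarith [Nat.mul_le_mul he he]
    obtain ⟨k, rfl⟩ : ∃ k, n = k + d := ⟨n - d, by omega⟩
    suffices Realisable k r from this.add_part d rfl (by omega)
    by_cases hbig : 116 ≤ k + d
    · refine ih k (by omega) r (by omega) ?_
      have hk : 38 ≤ k := by omega
      have hrk : r ≤ 2 * k + 1 := by omega
      nlinarith
    · refine realisable_of_lt_eighty (by omega) ?_
      split_ifs <;> omega

/-- For every integer `n ≥ 38` and every nonnegative even integer `2m` with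
`2m ≤ (4/9)·n²`, the integer `2m` is realisable in dimension `n`: there exist positive
integers `d₁, …, d_t` with `d₁ + ⋯ + d_t = n` and `d₁² + ⋯ + d_t² = n + 2m`. -/
theorem realisable_of_le (n m : ℕ) (hn : 38 ≤ n) (hm : (2 * m : ℝ) ≤ (4 / 9) * n ^ 2) :
    ∃ l : List ℕ, (∀ d ∈ l, 0 < d) ∧ l.sum = n ∧ (l.map fun d => d ^ 2).sum = n + 2 * m := by
  refine realisable_of_nine_mul_le n m hn ?_
  have : (9 * m : ℝ) ≤ 2 * n ^ 2 := by linarith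
  exact_mod_cast this
end

section
/- For every integer n ≥ 225 and every even integer 2m with 0 ≤ 2m ≤ n² − (9/2)·n·√n, there exist positive integers d₁, …, d_t with d₁ + ⋯ + d_t = n and d₁² + ⋯ + d_t² = n + 2m; equivalently, Mₙ(k) contains a connected semi-simple subalgebra of dimension n + 2m. -/
/-!
Padding with `d = 1` turns the problem into writing `m` as a sum of triangular numbers
`k (k + 1) / 2` (with `d = k + 1`) such that the parts `d` have total at most `n`.

Removing the largest triangular number `k (k + 1) / 2 ≤ r` from `r` leaves a remainder at most
`k`, which is of order `√(2 r)`. Strong induction on this greedy step shows that every `r` has a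
representation of total at most `4 + (9/4) √r` (`exists_rep_le`): the leading coefficient `√2` of
the greedy step is smaller than `9/4`, and the difference absorbs the lower-order term once
`k ≥ 16`, i.e. `r ≥ 136`; below that, three triangular numbers suffice, by a finite check.

Applying one greedy step to `m` itself, the hypothesis gives `k + 3 ≤ n - (9/4) √n`, and the
remainder, at most `k ≤ (√n - 1)²`, costs at most `4 + (9/4) (√n - 1)`. The total is at most `n`.
-/

/-- `r` is the sum of the `d (d - 1) / 2` over some positive integers `d` of total `S`; the
condition is stated through the squares of these integers. -/
def TriRep (r S : ℕ) : Prop :=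
  ∃ l : List ℕ, (∀ d ∈ l, 0 < d) ∧ l.sum = S ∧ (l.map fun d => d ^ 2).sum = S + 2 * r

lemma rep_zero : TriRep 0 0 := ⟨[], by simp⟩

/-- Adjoining the part `d = k + 1` adds the triangular number `k (k + 1) / 2`. -/
lemma TriRep.cons {r S r' : ℕ} (k : ℕ) (h : TriRep r S) (hr : 2 * r' = 2 * r + k * (k + 1)) :
    TriRep r' (S + (k + 1)) := by
  obtain ⟨l, h1, h2, h3⟩ := h
  refine ⟨(k + 1) :: l, ?_, ?_, ?_⟩
  · simpa using h1
  · simp only [List.sum_cons]; omega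
  · simp only [List.map_cons, List.sum_cons, h3, hr]; ring

lemma TriRep.mono {r S T : ℕ} (h : TriRep r S) (hT : S ≤ T) : TriRep r T := by
  induction T, hT using Nat.le_induction with
  | base => exact h
  | succ T _ ih => exact ih.cons 0 (by omega)

lemma exists_greedy (r : ℕ) : ∃ k s : ℕ, s ≤ k ∧ 2 * r = 2 * s + k * (k + 1) := by
  induction r with
  | zero => exact ⟨0, 0, by simp⟩
  | succ r ih =>
    obtain ⟨k, s, hs, h⟩ := ih
    rcases hs.lt_or_eq with hs | rfl
    · exact ⟨k, s + 1, hs, by omega⟩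
    · exact ⟨s + 1, 0, by omega, by linarith⟩

/-- Below `136`, three triangular numbers realise the bound of `exists_rep_le`. -/
lemma small_three : ∀ r < 136, ∃ a < 17, ∃ b < 17,
    a * (a + 1) + b * (b + 1) ≤ 2 * r ∧
    (let c := Nat.sqrt (2 * r - (a * (a + 1) + b * (b + 1)))
     a * (a + 1) + b * (b + 1) + c * (c + 1) = 2 * r ∧ 4 * (a + b + c) ≤ 4 + Nat.sqrt (81 * r)) := by
  decide +kernel

lemma rep_small {r : ℕ} (hr : r < 136) : ∃ S : ℕ, TriRep r S ∧ (S : ℝ) ≤ 4 + 9 / 4 * √(r : ℝ) := by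
  obtain ⟨a, -, b, -, -, h⟩ := small_three r hr
  obtain ⟨h1, h2⟩ := h
  set c := Nat.sqrt (2 * r - (a * (a + 1) + b * (b + 1)))
  -- Each of the doubled partial sums is even, so the intermediate remainders are integers.
  obtain ⟨x, hx⟩ := (Nat.even_mul_succ_self a).two_dvd
  obtain ⟨y, hy⟩ := (Nat.even_mul_succ_self b).two_dvd
  have ra : TriRep x (0 + (a + 1)) := rep_zero.cons a (by omega)
  have rb : TriRep (x + y) (0 + (a + 1) + (b + 1)) := ra.cons b (by omega)
  have rc : TriRep r (0 + (a + 1) + (b + 1) + (c + 1)) := rb.cons c (by omega)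
  refine ⟨_, rc, ?_⟩
  have h3 : ((Nat.sqrt (81 * r) : ℕ) : ℝ) ≤ 9 * √(r : ℝ) := by
    have h4 := Real.nat_sqrt_le_real_sqrt (a := 81 * r)
    have h5 : √((81 * r : ℕ) : ℝ) = 9 * √(r : ℝ) := by
      push_cast
      rw [Real.sqrt_mul (by norm_num), show (81 : ℝ) = 9 ^ 2 by norm_num,
        Real.sqrt_sq (by norm_num)]
    linarith
  have h6 : (4 * (a + b + c) : ℝ) ≤ 4 + (Nat.sqrt (81 * r) : ℕ) := by exact_mod_cast h2
  push_cast
  linarith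

/-- The greedy step preserves the bound `4 + (9/4) √r` as soon as `k ≥ 16`. -/
lemma greedy_bound {k r : ℝ} (hk : 16 ≤ k) (hr : k * (k + 1) ≤ 2 * r) :
    k + 1 + 9 / 4 * √k ≤ 9 / 4 * √r := by
  have hv : 4 ≤ √k := Real.le_sqrt_of_sq_le (by linarith)
  have hkv : √k ^ 2 = k := Real.sq_sqrt (by linarith)
  set v := √k
  have h : 4 / 9 * (k + 1 + 9 / 4 * v) ≤ √r := by
    apply Real.le_sqrt_of_sq_le
    -- With `v = 4 + t`, the difference of the two sides is a polynomial in `t` with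
    -- nonnegative coefficients.
    obtain ⟨t, ht⟩ : ∃ t : ℝ, v = 4 + t := ⟨v - 4, by ring⟩
    have ht0 : 0 ≤ t := by linarith
    have hr' : k * (k + 1) / 2 ≤ r := by linarith
    refine le_trans ?_ hr'
    rw [← hkv, ht]
    rw [← sub_nonneg]
    ring_nf
    positivity
  linarith

lemma exists_rep_le (r : ℕ) : ∃ S : ℕ, TriRep r S ∧ (S : ℝ) ≤ 4 + 9 / 4 * √(r : ℝ) := by
  induction r using Nat.strong_induction_on with
  | _ r ih =>
    rcases lt_or_ge r 136 with hr | hr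
    · exact rep_small hr
    obtain ⟨k, s, hs, h⟩ := exists_greedy r
    have hk : 16 ≤ k := by
      by_contra! hk
      have : k * (k + 1) ≤ 15 * 16 := Nat.mul_le_mul (by omega) (by omega)
      omega
    have hsr : s < r := by nlinarith
    obtain ⟨S, hS, hb⟩ := ih s hsr
    refine ⟨_, hS.cons k h, ?_⟩
    have h1 : √(s : ℝ) ≤ √(k : ℝ) := Real.sqrt_le_sqrt (by exact_mod_cast hs)
    have h2 := greedy_bound (k := k) (r := r) (by exact_mod_cast hk)
      (by exact_mod_cast (show k * (k + 1) ≤ 2 * r by omega))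
    push_cast
    linarith

/-- For every integer `n ≥ 225` and every even integer `2m` with
`0 ≤ 2m ≤ n² − (9/2)·n·√n`, the algebra `Mₙ(k)` contains a connected semi-simple
subalgebra of dimension `n + 2m`: there exist positive integers `d₁, …, d_t` with
`d₁ + ⋯ + d_t = n` and `d₁² + ⋯ + d_t² = n + 2m`. -/
theorem main_realisability (n m : ℕ) (hn : 225 ≤ n)
    (hm : (2 * m : ℝ) ≤ (n : ℝ) ^ 2 - (9 / 2) * n * Real.sqrt n) :
    ∃ l : List ℕ, (∀ d ∈ l, 0 < d) ∧ l.sum = n ∧ (l.map fun d => d ^ 2).sum = n + 2 * m := by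
  obtain ⟨k, s, hs, h⟩ := exists_greedy m
  obtain ⟨S, hS, hb⟩ := exists_rep_le s
  refine (hS.cons k h).mono ?_
  have hv : (15 : ℝ) ≤ √(n : ℝ) :=
    Real.le_sqrt_of_sq_le (by norm_num; exact_mod_cast hn)
  have hnv : √(n : ℝ) ^ 2 = n := Real.sq_sqrt (by positivity)
  set v := √(n : ℝ)
  have hkm : (k * (k + 1) : ℝ) ≤ 2 * m := by
    exact_mod_cast (show k * (k + 1) ≤ 2 * m by omega)
  -- Otherwise `k (k + 1) ≥ (n - 9v/4 - 3) (n - 9v/4 - 2) > n² - (9/2) n v`, as `81/16 > 5`.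
  have hk : (k : ℝ) ≤ n - 9 / 4 * v - 3 := by
    by_contra! hk
    have hpos : 0 ≤ (n : ℝ) - 9 / 4 * v - 3 := by nlinarith
    have := mul_le_mul hk.le (add_le_add_left hk.le 1) (by linarith) (by positivity)
    nlinarith
  have h1 : √(s : ℝ) ≤ v - 1 := by
    apply Real.sqrt_le_iff.mpr
    have : (s : ℝ) ≤ k := by exact_mod_cast hs
    exact ⟨by linarith, by nlinarith⟩
  have : ((S + (k + 1) : ℕ) : ℝ) ≤ n := by
    push_cast
    linarith
  exact_mod_cast this
end

section
/- For every integer n ≥ 49, every integer ℓ with 0 ≤ ℓ ≤ n² − (9/2)·n·√n − 2n is the dimension of a semi-simple subalgebra of Mₙ(k); that is, either ℓ = 0 or there exist positive integers d₁, …, d_t with d₁ + ⋯ + d_t ≤ n and d₁² + ⋯ + d_t² = ℓ. -/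
/-!
Split off the largest square twice: `ℓ = d² + e² + r` with `d = ⌊√ℓ⌋`, `e² ≤ ℓ - d² ≤ 2d` and
`r ≤ 2e`. By Lagrange, `r` is a sum of four squares, whose bases have a sum `b` with
`b² ≤ 4r ≤ 8e ≤ (e/2 + 4)²`. So `ℓ` is a sum of six squares whose bases add up to at most
`d + 3e/2 + 4` (`six_squares`).

Write `x = √n`. Since `(x² - 9x/4 - 7/2)² ≥ n² - (9/2)nx - 2n`, the hypothesis on `ℓ` gives
`d ≤ x² - 9x/4 - 7/2`, and `e² ≤ 2d ≤ 2x²` gives `e ≤ 17x/12`. The sum of the bases is thus at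
most `n - x/8 + 1/2`, which is less than `n` for `x ≥ 7`.
-/

/-- Six squares suffice for every `ℓ`, with `d` close to `√ℓ` and the other bases of total size
`O(√d)`. -/
lemma six_squares (ℓ : ℕ) : ∃ d e p q r s : ℕ,
    d ^ 2 + e ^ 2 + p ^ 2 + q ^ 2 + r ^ 2 + s ^ 2 = ℓ ∧ e ^ 2 ≤ 2 * d ∧
    2 * (p + q + r + s) ≤ e + 8 := by
  have h1 := Nat.sqrt_le' ℓ
  have h2 := Nat.sqrt_le_add ℓ
  set d := Nat.sqrt ℓ
  have h3 := Nat.sqrt_le' (ℓ - d ^ 2)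
  have h4 := Nat.sqrt_le_add (ℓ - d ^ 2)
  set e := Nat.sqrt (ℓ - d ^ 2)
  obtain ⟨p, q, r, s, h⟩ := Nat.sum_four_squares (ℓ - d ^ 2 - e ^ 2)
  rw [← pow_two] at h2 h4
  have h5 : p ^ 2 + q ^ 2 + r ^ 2 + s ^ 2 ≤ 2 * e := by omega
  refine ⟨d, e, p, q, r, s, by omega, by omega, ?_⟩
  by_contra! hlt
  zify at h5 hlt
  -- Cauchy–Schwarz for `(p + q + r + s)²`, together with `32 e ≤ (e + 8)²`
  nlinarith [sq_nonneg ((p : ℤ) - q), sq_nonneg ((p : ℤ) - r), sq_nonneg ((p : ℤ) - s),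
    sq_nonneg ((q : ℤ) - r), sq_nonneg ((q : ℤ) - s), sq_nonneg ((r : ℤ) - s),
    sq_nonneg ((e : ℤ) - 8)]

/-- Discarding the zero entries of a list changes neither its sum nor its sum of squares. -/
lemma exists_pos_list (l : List ℕ) : ∃ l' : List ℕ, (∀ d ∈ l', 0 < d) ∧ l'.sum = l.sum ∧
    (l'.map fun d => d ^ 2).sum = (l.map fun d => d ^ 2).sum := by
  induction l with
  | nil => exact ⟨[], by simp⟩
  | cons a l ih =>
    obtain ⟨l', h1, h2, h3⟩ := ih
    rcases Nat.eq_zero_or_pos a with rfl | ha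
    · exact ⟨l', h1, by simp [h2], by simp [h3]⟩
    · exact ⟨a :: l', by simpa using ⟨ha, h1⟩, by simp [h2], by simp [h3]⟩

/-- For every integer `n ≥ 49`, every integer `ℓ` with `0 ≤ ℓ ≤ n² − (9/2)·n·√n − 2n`
is the dimension of a semi-simple subalgebra of `Mₙ(k)`: either `ℓ = 0` or there exist
positive integers `d₁, …, d_t` with `d₁ + ⋯ + d_t ≤ n` and `d₁² + ⋯ + d_t² = ℓ`. -/
theorem semisimple_dims_interval (n ℓ : ℕ) (hn : 49 ≤ n)
    (hℓ : (ℓ : ℝ) ≤ (n : ℝ) ^ 2 - (9 / 2) * n * Real.sqrt n - 2 * n) :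
    ℓ = 0 ∨ ∃ l : List ℕ, (∀ d ∈ l, 0 < d) ∧ l.sum ≤ n ∧ (l.map fun d => d ^ 2).sum = ℓ := by
  right
  obtain ⟨d, e, p, q, r, s, hsum, he, hb⟩ := six_squares ℓ
  obtain ⟨l, h1, h2, h3⟩ := exists_pos_list [d, e, p, q, r, s]
  refine ⟨l, h1, ?_, ?_⟩
  · have hx : Real.sqrt n ^ 2 = n := Real.sq_sqrt (Nat.cast_nonneg n)
    have hx7 : 7 ≤ Real.sqrt n := Real.le_sqrt_of_sq_le (by norm_num; exact_mod_cast hn)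
    set x := Real.sqrt n
    have hdℓ : (d : ℝ) ^ 2 ≤ ℓ := by
      have : d ^ 2 ≤ ℓ := by omega
      exact_mod_cast this
    have heR : (e : ℝ) ^ 2 ≤ 2 * d := by exact_mod_cast he
    have hbR : 2 * ((p : ℝ) + q + r + s) ≤ e + 8 := by exact_mod_cast hb
    rw [← hx] at hℓ
    have hd : (d : ℝ) ≤ x ^ 2 - 9 / 4 * x - 7 / 2 := by
      refine (abs_le_of_sq_le_sq' ?_ (by nlinarith)).2
      nlinarith
    have hex : (e : ℝ) ≤ 17 / 12 * x := by
      refine (abs_le_of_sq_le_sq' ?_ (by positivity)).2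
      nlinarith
    have : ((d + e + p + q + r + s : ℕ) : ℝ) ≤ n := by
      push_cast
      linarith
    have : d + e + p + q + r + s ≤ n := by exact_mod_cast this
    simp only [h2, List.sum_cons, List.sum_nil]
    omega
  · simp only [h3, List.map_cons, List.map_nil, List.sum_cons, List.sum_nil]
    omega
end

section
/- The proportion of integers in [0, n²] which are dimensions of semi-simple subalgebras of Mₙ(k) tends to 1 as n → ∞; that is, if D(n) denotes the set of integers ℓ in [0, n²] such that ℓ = 0 or there exist positive integers d₁, …, d_t with d₁ + ⋯ + d_t ≤ n and d₁² + ⋯ + d_t² = ℓ, then |D(n)| / (n² + 1) → 1 as n → ∞. -/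
/-!
Greedy argument. Given `ℓ`, let `m = ⌊√ℓ⌋`, so that the remainder `r = ℓ - m²` is at most `2m`.
By Lagrange, `r = a² + b² + c² + d²`, and by Cauchy–Schwarz `(a + b + c + d)² ≤ 4r ≤ 8m`. Hence `ℓ`
is a sum of squares of integers whose sum is at most `m + √(8m)`. With `k = ⌊√(8n)⌋`, every
`ℓ < (n - k)²` is therefore in `ssDims n`, so the number of integers of `[0, n²]` outside `ssDims n`
is `O(n^{3/2})`, which is negligible against `n²`.
-/

open scoped Classical in
/-- `D n` is the set of integers `ℓ ∈ [0, n²]` which are dimensions of (not necessarily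
connected) semi-simple subalgebras of `Mₙ(k)`: `ℓ = 0` or there exist positive integers
`d₁, …, d_t` with `d₁ + ⋯ + d_t ≤ n` and `d₁² + ⋯ + d_t² = ℓ`. -/
noncomputable def ssDims (n : ℕ) : Finset ℕ :=
  (Finset.range (n ^ 2 + 1)).filter fun ℓ =>
    ℓ = 0 ∨ ∃ l : List ℕ, (∀ d ∈ l, 0 < d) ∧ l.sum ≤ n ∧ (l.map fun d => d ^ 2).sum = ℓ

lemma mem_ssDims_of_lt {n l : ℕ} (h : l < (n - Nat.sqrt (8 * n)) ^ 2) : l ∈ ssDims n := by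
  have hm : Nat.sqrt l < n - Nat.sqrt (8 * n) := Nat.sqrt_lt'.2 h
  have hn : l < n ^ 2 := h.trans_le (Nat.pow_le_pow_left (Nat.sub_le _ _) 2)
  have h1 : Nat.sqrt l ^ 2 ≤ l := Nat.sqrt_le' l
  have h2 : l ≤ Nat.sqrt l * Nat.sqrt l + Nat.sqrt l + Nat.sqrt l := Nat.sqrt_le_add l
  obtain ⟨a, b, c, d, hr⟩ := Nat.sum_four_squares (l - Nat.sqrt l ^ 2)
  have hs : a ^ 2 + b ^ 2 + c ^ 2 + d ^ 2 ≤ 2 * n := by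
    rw [hr, sq]; omega
  have hk : a + b + c + d ≤ Nat.sqrt (8 * n) := by
    refine Nat.le_sqrt'.2 ?_
    zify at hs ⊢
    nlinarith [sq_nonneg ((a : ℤ) - b), sq_nonneg ((a : ℤ) - c), sq_nonneg ((a : ℤ) - d),
      sq_nonneg ((b : ℤ) - c), sq_nonneg ((b : ℤ) - d), sq_nonneg ((c : ℤ) - d)]
  obtain ⟨l', p1, p2, p3⟩ := exists_pos_list [Nat.sqrt l, a, b, c, d]
  simp only [ssDims, Finset.mem_filter, Finset.mem_range]
  refine ⟨by omega, Or.inr ⟨l', p1, ?_, ?_⟩⟩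
  · rw [p2]; simp only [List.sum_cons, List.sum_nil]; omega
  · rw [p3]; simp only [List.map_cons, List.map_nil, List.sum_cons, List.sum_nil]; omega

lemma card_ssDims_ge (n : ℕ) : (n - Nat.sqrt (8 * n)) ^ 2 ≤ (ssDims n).card := by
  have := Finset.card_le_card (s := Finset.range ((n - Nat.sqrt (8 * n)) ^ 2)) (t := ssDims n)
    fun l hl => mem_ssDims_of_lt (Finset.mem_range.1 hl)
  simpa using this

lemma card_ssDims_le (n : ℕ) : (ssDims n).card ≤ n ^ 2 + 1 := by
  classical exact (Finset.card_filter_le _ _).trans_eq (Finset.card_range _)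

lemma density_lower_bound {n : ℕ} (hn : 0 < n) :
    1 - 7 / √(n : ℝ) ≤ ((ssDims n).card : ℝ) / (n ^ 2 + 1) := by
  have hn1 : (1 : ℝ) ≤ n := by exact_mod_cast hn
  obtain ⟨s, hs⟩ : ∃ s, s = √(n : ℝ) := ⟨_, rfl⟩
  have hs1 : 1 ≤ s := hs ▸ Real.one_le_sqrt.2 hn1
  have hsn : (n : ℝ) = s ^ 2 := by rw [hs, Real.sq_sqrt (by positivity)]
  have hk : (Nat.sqrt (8 * n) : ℝ) ≤ 3 * s := by
    have : ((Nat.sqrt (8 * n) ^ 2 : ℕ) : ℝ) ≤ ((8 * n : ℕ) : ℝ) := by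
      exact_mod_cast Nat.sqrt_le' (8 * n)
    push_cast at this
    refine le_of_sq_le_sq ?_ (by positivity)
    nlinarith
  have hsub : (n : ℝ) - Nat.sqrt (8 * n) ≤ ((n - Nat.sqrt (8 * n) : ℕ) : ℝ) := by
    rw [sub_le_iff_le_add]; exact_mod_cast le_tsub_add
  have hc : (((n - Nat.sqrt (8 * n) : ℕ) : ℝ)) ^ 2 ≤ (ssDims n).card := by
    exact_mod_cast card_ssDims_ge n
  rw [← hs, le_div_iff₀ (by positivity)]
  -- `x² ≥ n² - 2n(n - x)` also covers the case where the subtraction `n - k` truncates to `0`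
  have hx : (n : ℝ) ^ 2 - 2 * n * (3 * s) ≤ (ssDims n).card := by
    nlinarith [sq_nonneg ((n : ℝ) - ((n - Nat.sqrt (8 * n) : ℕ) : ℝ))]
  refine le_trans ?_ hx
  rw [hsn, sub_mul, one_mul, div_mul_eq_mul_div, sub_le_iff_le_add, ← sub_le_iff_le_add',
    le_div_iff₀ (by positivity)]
  nlinarith [pow_le_pow_right₀ hs1 (show 1 ≤ 4 by norm_num)]

/-- The proportion of integers in `[0, n²]` which are dimensions of semi-simple
subalgebras of `Mₙ(k)` tends to `1` as `n → ∞`. -/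
theorem ssDims_density_tendsto_one :
    Filter.Tendsto (fun n : ℕ => ((ssDims n).card : ℝ) / (n ^ 2 + 1)) Filter.atTop
      (nhds 1) := by
  have hlow : Filter.Tendsto (fun n : ℕ => 1 - 7 / √(n : ℝ)) Filter.atTop (nhds 1) := by
    have h := (Real.tendsto_sqrt_atTop.comp tendsto_natCast_atTop_atTop).const_div_atTop (7 : ℝ)
    simpa using h.const_sub 1
  refine tendsto_of_tendsto_of_tendsto_of_le_of_le' hlow tendsto_const_nhds ?_ ?_
  · filter_upwards [Filter.eventually_gt_atTop 0] with n hn using density_lower_bound hn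
  · refine Filter.Eventually.of_forall fun n => div_le_one_of_le₀ ?_ (by positivity)
    exact_mod_cast card_ssDims_le n
end
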